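/- Let A be a group acting 2-transitively on a set of size 280, viewed via the Galois action on roots: if the polynomial p(t)q(X) - p(X)q(t) over K(t) has an irreducible factor of degree 36 (other than X - t), then A is not 2-transitive; contrapositive: a 2-transitive Galois group forces (p(t)q(X) - p(X)q(t))/(X - t) to be irreducible. -/

import Mathlib

open Polynomial

theorem aux_arith (m q n : ℕ) (hq : q = 1 ∨ q.Prime) (h : m * q ^ n = 280)
    (hm : m - 1 ∣ 36) : False := by
  have hle : m - 1 ≤ 36 := Nat.le_of_dvd (by norm_num) hm
  have hle' : m ≤ 37 := by omega
  have key : ∀ r : ℕ, r.Prime → r ≠ 2 → 2 ∣ q ^ n → r ∣ q ^ n → False := by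
    intro r hr hr2 h2 hrq
    rcases hq with rfl | hq
    · simp at h2
    · have e2 := (Nat.prime_dvd_prime_iff_eq Nat.prime_two hq).1
        (Nat.prime_two.dvd_of_dvd_pow h2)
      have er := (Nat.prime_dvd_prime_iff_eq hr hq).1 (hr.dvd_of_dvd_pow hrq)
      omega
  have k5 := key 5 (by norm_num) (by norm_num)
  have k7 := key 7 (by norm_num) (by norm_num)
  generalize q ^ n = Q at *
  interval_cases m <;> first | omega | (norm_num at hm; done) |
    exact k5 (by omega) (by omega) | exact k7 (by omega) (by omega)

theorem aux_irred {K : Type*} [Field K] (p q : K[X]) (hq0 : q ≠ 0)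
    (hp : p.natDegree ≠ 0) (hcop : IsCoprime p q) (hpq : q.natDegree < p.natDegree) :
    Irreducible (p.map (algebraMap K (RatFunc K)) -
      C RatFunc.X * q.map (algebraMap K (RatFunc K))) := by
  have h1 : Irreducible (C (-q) * X + C p : K[X][X]) :=
    irreducible_C_mul_X_add_C (neg_ne_zero.mpr hq0)
      ((IsCoprime.neg_right_iff _ _).mpr hcop).symm.isRelPrime
  have h2 : Irreducible (p.map C - C X * q.map C : K[X][X]) := by
    have := (MulEquiv.irreducible_iff (Bivariate.swap (R := K)).toMulEquiv).2 h1
    convert this using 1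
    change _ = Bivariate.swap _
    rw [map_add, map_mul, Bivariate.swap_Y, Bivariate.swap_C, Bivariate.swap_C,
      Polynomial.map_neg]
    ring
  have hmap : (p.map C - C X * q.map C : K[X][X]).map (algebraMap K[X] (RatFunc K)) =
      p.map (algebraMap K (RatFunc K)) -
      C RatFunc.X * q.map (algebraMap K (RatFunc K)) := by
    have : (algebraMap K[X] (RatFunc K)).comp C = algebraMap K (RatFunc K) := by
      ext; simp
    rw [Polynomial.map_sub, Polynomial.map_mul, map_map, map_map, this, map_C,
      RatFunc.algebraMap_X]
  rw [← hmap]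
  refine (IsPrimitive.irreducible_iff_irreducible_map_fraction_map ?_).1 h2
  refine h2.isPrimitive ?_
  have hlt : (C X * q.map C : K[X][X]).natDegree < (p.map C : K[X][X]).natDegree := by
    rw [natDegree_map_eq_of_injective C_injective]
    refine (natDegree_C_mul_le _ _).trans_lt ?_
    rwa [natDegree_map_eq_of_injective C_injective]
  rw [natDegree_sub_eq_left_of_natDegree_lt hlt, natDegree_map_eq_of_injective C_injective]
  exact hp

theorem aux_sep {E : Type*} [Field E] (f : E[X]) (hf : Irreducible f) :
    ∃ q n : ℕ, (q = 1 ∨ q.Prime) ∧ f.natSepDegree * q ^ n = f.natDegree := by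
  obtain ⟨q, hq⟩ := ExpChar.exists E
  have hc := hf.hasSeparableContraction q
  obtain ⟨g, hg⟩ := hc
  have := hg.natSepDegree_eq
  obtain ⟨hs, n, rfl⟩ := hg
  refine ⟨q, n, ?_, ?_⟩
  · rcases hq with _ | hq
    · exact Or.inl rfl
    · exact Or.inr hq
  · rw [this, natDegree_expand]

theorem aux_int {K L : Type*} [Field K] [Field L] [Algebra K L] (x : L) (hx : IsIntegral K x)
    (r : K[X]) : IsIntegral K (aeval x r) := by
  rw [aeval_eq_sum_range]
  exact IsIntegral.sum _ fun i _ => (hx.pow i).smul _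

theorem aux_main {K L : Type*} [Field K] [Field L] [Algebra K L] [Algebra (RatFunc K) L]
    [IsScalarTower K (RatFunc K) L] (p q : K[X]) (hq0 : q ≠ 0) (hcop : IsCoprime p q)
    (hpq : q.natDegree < p.natDegree)
    (F : (RatFunc K)[X])
    (hF : F = p.map (algebraMap K (RatFunc K)) -
      C RatFunc.X * q.map (algebraMap K (RatFunc K)))
    (Φ : (RatFunc K)[X])
    (hΦ : Φ = C (p.eval₂ (algebraMap K (RatFunc K)) RatFunc.X) *
        q.map (algebraMap K (RatFunc K)) -
      p.map (algebraMap K (RatFunc K)) *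
        C (q.eval₂ (algebraMap K (RatFunc K)) RatFunc.X))
    (g : (RatFunc K)[X]) (hg : Irreducible g) (hgΦ : g ∣ Φ)
    (hgdeg : g.natDegree ≠ 1) (hFirr : Irreducible F)
    (hsp : (F.map (algebraMap (RatFunc K) L)).Splits)
    (H : ∀ x y z : L, x ∈ F.rootSet L → y ∈ F.rootSet L → z ∈ F.rootSet L → x ≠ y → x ≠ z →
      ∃ σ : L ≃ₐ[RatFunc K] L, σ x = x ∧ σ y = z) :
    g.natSepDegree = F.natSepDegree - 1 := by
  classical
  have hF0 : F ≠ 0 := hFirr.ne_zero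
  have hFdeg : (F.map (algebraMap (RatFunc K) L)).degree ≠ 0 := by
    rw [degree_map]
    exact (degree_pos_of_irreducible hFirr).ne'
  obtain ⟨x, hx⟩ := hsp.exists_eval_eq_zero hFdeg
  have evF : ∀ y : L, (F.map (algebraMap (RatFunc K) L)).eval y =
      aeval y p - algebraMap (RatFunc K) L RatFunc.X * aeval y q := by
    intro y
    rw [hF, Polynomial.map_sub, Polynomial.map_mul, map_map, map_map,
      ← IsScalarTower.algebraMap_eq, map_C, eval_sub, eval_mul, eval_C,
      eval_map_algebraMap, eval_map_algebraMap]
  have hx' : aeval x p = algebraMap (RatFunc K) L RatFunc.X * aeval x q := by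
    rw [evF] at hx
    exact sub_eq_zero.1 hx
  have hqx : aeval x q ≠ 0 := by
    intro h0
    rw [h0, mul_zero] at hx'
    obtain ⟨a, b, hab⟩ := hcop
    have := congrArg (aeval x) hab
    simp [h0, hx'] at this
  -- transcendence
  have htr : Transcendental K x := by
    intro halg
    have h1 : IsAlgebraic K (aeval x p / aeval x q) := by
      have hp' : IsIntegral K (aeval x p) := aux_int x halg.isIntegral p
      have hq' : IsIntegral K (aeval x q) := aux_int x halg.isIntegral q
      rw [div_eq_mul_inv]
      exact (hp'.isAlgebraic.mul hq'.isAlgebraic.inv)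
    rw [hx', mul_div_cancel_right₀ _ hqx,
      isAlgebraic_algebraMap_iff (algebraMap (RatFunc K) L).injective] at h1
    exact RatFunc.transcendental_X h1
  have hinj : Function.Injective (aeval (R := K) x) := transcendental_iff_injective.1 htr
  have hcomap : nonZeroDivisors K[X] ≤ (nonZeroDivisors L).comap (aeval (R := K) x) :=
    nonZeroDivisors_le_comap_nonZeroDivisors_of_injective _ hinj
  let φ : RatFunc K →ₐ[K] L := RatFunc.liftAlgHom (aeval (R := K) x) hcomap
  have hφ : ∀ r : K[X], φ (algebraMap K[X] (RatFunc K) r) = aeval x r := by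
    intro r
    have := RatFunc.liftAlgHom_apply_div (aeval (R := K) x) hcomap r 1
    simpa using this
  have hφX : φ RatFunc.X = x := by
    rw [← RatFunc.algebraMap_X, hφ, aeval_X]
  have hφeval : ∀ r : K[X], φ (r.eval₂ (algebraMap K (RatFunc K)) RatFunc.X) = aeval x r := by
    intro r
    have := aeval_algHom_apply φ RatFunc.X r
    rw [hφX] at this
    rw [this, aeval_def]
  have hφmap : ∀ r : K[X], (r.map (algebraMap K (RatFunc K))).map (φ : RatFunc K →+* L) =
      r.map (algebraMap K L) := by
    intro r
    rw [map_map, AlgHom.comp_algebraMap]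
  have hΦmap : Φ.map (φ : RatFunc K →+* L) =
      C (-(aeval x q)) * F.map (algebraMap (RatFunc K) L) := by
    have e1 : F.map (algebraMap (RatFunc K) L) = p.map (algebraMap K L) -
        C (algebraMap (RatFunc K) L RatFunc.X) * q.map (algebraMap K L) := by
      rw [hF, Polynomial.map_sub, Polynomial.map_mul, map_map, map_map,
        ← IsScalarTower.algebraMap_eq, map_C]
    rw [hΦ, e1, Polynomial.map_sub, Polynomial.map_mul, Polynomial.map_mul, hφmap, hφmap,
      map_C, map_C, RingHom.coe_coe, hφeval, hφeval, hx']
    simp only [map_neg, map_mul]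
    ring
  have hF0' : F.map (algebraMap (RatFunc K) L) ≠ 0 := (Polynomial.map_ne_zero_iff
    (algebraMap (RatFunc K) L).injective).2 hF0
  have hgdvd : g.map (φ : RatFunc K →+* L) ∣ F.map (algebraMap (RatFunc K) L) := by
    have h1 := Polynomial.map_dvd (φ : RatFunc K →+* L) hgΦ
    rw [hΦmap] at h1
    exact (IsUnit.dvd_mul_left (isUnit_C.2 (neg_ne_zero.2 hqx).isUnit)).1 h1
  have hgsp : (g.map (φ : RatFunc K →+* L)).Splits := hsp.of_dvd hF0' hgdvd
  have hg0 : g.map (φ : RatFunc K →+* L) ≠ 0 := (Polynomial.map_ne_zero_iff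
    (φ : RatFunc K →+* L).injective).2 hg.ne_zero
  -- `x` is not a root of `g`
  have hxg : (g.map (φ : RatFunc K →+* L)).eval x ≠ 0 := by
    intro h0
    have h1 : (φ : RatFunc K →+* L) (g.eval RatFunc.X) = 0 := by
      rw [← h0, eval_map, ← eval₂_at_apply, RingHom.coe_coe, hφX]
    have h2 : g.eval RatFunc.X = 0 := by simpa using h1
    exact hgdeg (natDegree_eq_of_degree_eq_some (degree_eq_one_of_irreducible_of_root hg h2))
  obtain ⟨y, hy⟩ := hgsp.exists_eval_eq_zero (by
    rw [degree_map]
    exact (degree_pos_of_irreducible hg).ne')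
  have memF : ∀ z : L, z ∈ F.rootSet L ↔ (F.map (algebraMap (RatFunc K) L)).eval z = 0 := by
    intro z
    rw [mem_rootSet_of_ne hF0, eval_map_algebraMap]
  have hroots : (g.map (φ : RatFunc K →+* L)).roots.toFinset =
      (F.map (algebraMap (RatFunc K) L)).roots.toFinset.erase x := by
    ext z
    rw [Finset.mem_erase, Multiset.mem_toFinset, Multiset.mem_toFinset, mem_roots hg0,
      mem_roots hF0', IsRoot.def, IsRoot.def]
    constructor
    · intro hz
      refine ⟨?_, eval_eq_zero_of_dvd_of_eval_eq_zero hgdvd hz⟩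
      rintro rfl
      exact hxg hz
    · rintro ⟨hzx, hz⟩
      obtain ⟨σ, hσx, hσy⟩ := H x y z ((memF x).2 hx)
        ((memF y).2 (eval_eq_zero_of_dvd_of_eval_eq_zero hgdvd hy)) ((memF z).2 hz)
        (by rintro rfl; exact hxg hy) (Ne.symm hzx)
      have hcomp : (σ : L →+* L).comp (φ : RatFunc K →+* L) = (φ : RatFunc K →+* L) := by
        apply IsLocalization.ringHom_ext (nonZeroDivisors K[X])
        ext a
        · simp only [RingHom.comp_apply, RingHom.coe_coe, hφ, aeval_C]
          rw [IsScalarTower.algebraMap_apply K (RatFunc K) L]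
          exact σ.commutes _
        · simp only [RingHom.comp_apply, RingHom.coe_coe, hφ, aeval_X]
          exact hσx
      have h3 : (σ : L →+* L) ((g.map (φ : RatFunc K →+* L)).eval y) = 0 := by
        rw [hy, map_zero]
      rw [← eval₂_at_apply, ← eval_map, map_map, hcomp] at h3
      have h4 : (σ : L →+* L) y = z := hσy
      rwa [h4] at h3
  have s1 : F.natSepDegree = (F.map (algebraMap (RatFunc K) L)).roots.toFinset.card :=
    natSepDegree_eq_of_splits F hsp
  have s2 : g.natSepDegree = (g.map (φ : RatFunc K →+* L)).roots.toFinset.card := by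
    rw [← natSepDegree_map _ g (φ : RatFunc K →+* L)]
    have := natSepDegree_eq_of_splits (E := L) (g.map (φ : RatFunc K →+* L))
      (by simpa using hgsp)
    simpa [aroots_def] using this
  rw [s1, s2, hroots, Finset.card_erase_of_mem]
  rw [Multiset.mem_toFinset, mem_roots hF0']
  exact hx

/-- Let `f = p/q` be a rational function of degree 280 over `K` and let
`A = Gal(p(X) - t·q(X) / K(t))` act on the roots. If
`p(t)·q(X) - p(X)·q(t)` has an irreducible factor of degree 36 over `K(t)`
(in particular one other than `X - t`), then `A` is not 2-transitive. -/
theorem stmt_8 (K : Type*) [Field K] (p q : K[X])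
    (hp : p.natDegree = 280) (hq : q.natDegree < 280) (hcop : IsCoprime p q)
    -- `F = p(X) - t·q(X)` over `K(t)`
    (F : (RatFunc K)[X])
    (hF : F = p.map (algebraMap K (RatFunc K)) -
      C RatFunc.X * q.map (algebraMap K (RatFunc K)))
    -- `Φ = p(t)·q(X) - p(X)·q(t)` over `K(t)`
    (Φ : (RatFunc K)[X])
    (hΦ : Φ = C (p.eval₂ (algebraMap K (RatFunc K)) RatFunc.X) *
        q.map (algebraMap K (RatFunc K)) -
      p.map (algebraMap K (RatFunc K)) *
        C (q.eval₂ (algebraMap K (RatFunc K)) RatFunc.X))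
    (g : (RatFunc K)[X]) (hg : Irreducible g) (hgΦ : g ∣ Φ)
    (hgdeg : g.natDegree = 36) :
    ¬ (∀ a b c d : F.rootSet F.SplittingField, a ≠ b → c ≠ d →
        ∃ σ : F.Gal, σ • a = c ∧ σ • b = d) := by
  intro H
  have hq0 : q ≠ 0 := by
    rintro rfl
    have := natDegree_eq_zero_of_isUnit (isCoprime_zero_right.1 hcop)
    omega
  have hpq : q.natDegree < p.natDegree := by omega
  have hFirr : Irreducible F := by
    rw [hF]
    exact aux_irred p q hq0 (by omega) hcop hpq
  have hFdeg : F.natDegree = 280 := by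
    rw [hF, natDegree_sub_eq_left_of_natDegree_lt, natDegree_map, hp]
    rw [natDegree_map, hp]
    refine (natDegree_C_mul_le _ _).trans_lt ?_
    rwa [natDegree_map]
  have key := aux_main (L := F.SplittingField) p q hq0 hcop hpq F hF Φ hΦ g hg hgΦ (by omega)
    hFirr (SplittingField.splits F) (by
      intro x y z hx hy hz hxy hxz
      obtain ⟨σ, h1, h2⟩ := H ⟨x, hx⟩ ⟨y, hy⟩ ⟨x, hx⟩ ⟨z, hz⟩
        (fun h => hxy (congrArg Subtype.val h)) (fun h => hxz (congrArg Subtype.val h))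
      exact ⟨σ, congrArg Subtype.val h1, congrArg Subtype.val h2⟩)
  obtain ⟨r, n, hr, hrn⟩ := aux_sep F hFirr
  have hd := hg.natSepDegree_dvd_natDegree
  rw [key, hgdeg] at hd
  exact aux_arith _ r n hr (hrn.trans hFdeg) hd
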